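/- Let n ≥ 1 and let c_1,…,c_{2n} be the Jordan–Wigner Majorana operators on (ℂ²)^{⊗n}. For any permutation σ of {1,…,2n}, the operators ic_{σ(1)}c_{σ(2)}, ic_{σ(3)}c_{σ(4)}, …, ic_{σ(2n−1)}c_{σ(2n)} are pairwise commuting Hermitian involutions, and their joint (+1)-eigenspace { φ ∈ (ℂ²)^{⊗n} : i c_{σ(2j−1)} c_{σ(2j)} φ = φ for all j = 1,…,n } has complex dimension exactly 1. -/

import Mathlib

open scoped Matrix

/-- The Pauli X matrix. -/
noncomputable def pauliX : Matrix (Fin 2) (Fin 2) ℂ := !![0, 1; 1, 0]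

/-- The Pauli Y matrix. -/
noncomputable def pauliY : Matrix (Fin 2) (Fin 2) ℂ := !![0, -Complex.I; Complex.I, 0]

/-- The Pauli Z matrix. -/
noncomputable def pauliZ : Matrix (Fin 2) (Fin 2) ℂ := !![1, 0; 0, -1]

/-- The `n`-fold tensor (Kronecker) product of single-qubit matrices. -/
noncomputable def tensorProd (n : ℕ) (A : Fin n → Matrix (Fin 2) (Fin 2) ℂ) :
    Matrix (Fin n → Fin 2) (Fin n → Fin 2) ℂ :=
  fun x y => ∏ j : Fin n, A j (x j) (y j)

/-- The Jordan–Wigner Majorana operators (0-indexed):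
`c_{2j} = Z^{⊗j} ⊗ Y ⊗ I^{⊗(n-j-1)}`, `c_{2j+1} = Z^{⊗j} ⊗ X ⊗ I^{⊗(n-j-1)}`. -/
noncomputable def jw (n : ℕ) (p : Fin (2 * n)) :
    Matrix (Fin n → Fin 2) (Fin n → Fin 2) ℂ :=
  tensorProd n (fun j =>
    if (j : ℕ) < (p : ℕ) / 2 then pauliZ
    else if (j : ℕ) = (p : ℕ) / 2 then (if (p : ℕ) % 2 = 0 then pauliY else pauliX)
    else 1)

/-- The paired link operators `i c_{σ(2j-1)} c_{σ(2j)}` determined by a permutation `σ`. -/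
noncomputable def linkOp (n : ℕ) (σ : Equiv.Perm (Fin (2 * n))) (j : Fin n) :
    Matrix (Fin n → Fin 2) (Fin n → Fin 2) ℂ :=
  Complex.I • (jw n (σ ⟨2 * (j : ℕ), by omega⟩) * jw n (σ ⟨2 * (j : ℕ) + 1, by omega⟩))

/-!
The operator `c_{σ(2j-1)}` anticommutes with the `j`-th link operator and commutes with all the
others. It therefore preserves the joint `(+1)`-eigenspace of the other link operators and exchanges
the two eigenspaces of the `j`-th one inside it. So imposing the `n` eigenvalue equations one at a
time halves the dimension at every step, from `2 ^ n` down to `1`.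
-/

section JointFixedSpace

open Module Module.End

variable {K V : Type*} [Field K] [AddCommGroup V] [Module K V]

theorem inf_eigenspace_one_sup_inf_eigenspace_neg_one [NeZero (2 : K)] {f : End K V}
    (hf : f * f = 1) {W : Submodule K V} (hW : Set.MapsTo f W W) :
    W ⊓ eigenspace f 1 ⊔ W ⊓ eigenspace f (-1) = W := by
  refine le_antisymm (sup_le inf_le_left inf_le_left) fun v hv ↦ ?_
  have hff : f (f v) = v := LinearMap.congr_fun hf v
  have half_add_half : (2⁻¹ : K) • (v + f v) + (2⁻¹ : K) • (v - f v) = v := by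
    rw [← smul_add, add_add_sub_cancel, ← two_smul K v, inv_smul_smul₀ two_ne_zero]
  rw [← half_add_half]
  refine Submodule.add_mem_sup
    ⟨W.smul_mem _ (W.add_mem hv (hW hv)), mem_eigenspace_iff.mpr ?_⟩
    ⟨W.smul_mem _ (W.sub_mem hv (hW hv)), mem_eigenspace_iff.mpr ?_⟩
  · rw [map_smul, map_add, hff, one_smul, add_comm]
  · rw [map_smul, map_sub, hff, neg_one_smul, ← smul_neg, neg_sub]

theorem finrank_inf_eigenspace_le_of_anticomm [FiniteDimensional K V] {f g : End K V}
    (hg : Function.Injective g) (hgf : g * f = -(f * g)) {W : Submodule K V}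
    (hW : Set.MapsTo g W W) (μ : K) :
    finrank K ↥(W ⊓ eigenspace f μ) ≤ finrank K ↥(W ⊓ eigenspace f (-μ)) := by
  have map_le : (W ⊓ eigenspace f μ).map g ≤ W ⊓ eigenspace f (-μ) := by
    rintro _ ⟨v, ⟨hvW, hv⟩, rfl⟩
    have hfg : f (g v) = -g (f v) := by
      rw [← neg_eq_iff_eq_neg]
      exact (LinearMap.congr_fun hgf v).symm
    refine ⟨hW hvW, mem_eigenspace_iff.mpr ?_⟩
    rw [hfg, mem_eigenspace_iff.mp hv, map_smul, neg_smul]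
  rw [(Submodule.equivMapOfInjective g hg _).finrank_eq]
  exact Submodule.finrank_mono map_le

theorem two_mul_finrank_inf_eigenspace_one [NeZero (2 : K)] [FiniteDimensional K V]
    {f g : End K V} (hf : f * f = 1) (hg : Function.Injective g) (hgf : g * f = -(f * g))
    {W : Submodule K V} (hfW : Set.MapsTo f W W) (hgW : Set.MapsTo g W W) :
    2 * finrank K ↥(W ⊓ eigenspace f 1) = finrank K W := by
  have finrank_eq : finrank K ↥(W ⊓ eigenspace f 1) = finrank K ↥(W ⊓ eigenspace f (-1)) := by
    refine (finrank_inf_eigenspace_le_of_anticomm hg hgf hgW 1).antisymm ?_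
    have le_neg_neg := finrank_inf_eigenspace_le_of_anticomm hg hgf hgW (-1)
    rwa [neg_neg] at le_neg_neg
  have one_ne_neg_one : (1 : K) ≠ -1 := by
    rw [Ne, eq_neg_iff_add_eq_zero, one_add_one_eq_two]
    exact two_ne_zero
  have disjoint : Disjoint (W ⊓ eigenspace f 1) (W ⊓ eigenspace f (-1)) :=
    (disjoint_genEigenspace f one_ne_neg_one 1 1).mono inf_le_right inf_le_right
  have finrank_add := Submodule.finrank_sup_add_finrank_inf_eq
    (W ⊓ eigenspace f 1) (W ⊓ eigenspace f (-1))
  rw [inf_eigenspace_one_sup_inf_eigenspace_neg_one hf hfW, disjoint.eq_bot, finrank_bot,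
    ← finrank_eq] at finrank_add
  lia

theorem mapsTo_inf_eigenspace_of_commute {ι : Type*} {f : ι → End K V} {g : End K V}
    {s : Finset ι} (h : ∀ j ∈ s, Commute (f j) g) (μ : K) :
    Set.MapsTo g (s.inf fun j ↦ eigenspace (f j) μ : Submodule K V)
      (s.inf fun j ↦ eigenspace (f j) μ : Submodule K V) := by
  intro v hv
  simp only [SetLike.mem_coe, Submodule.mem_finsetInf] at hv ⊢
  exact fun j hj ↦ mapsTo_genEigenspace_of_comm (h j hj) μ 1 (hv j hj)

theorem two_pow_card_mul_finrank_inf_eigenspace [NeZero (2 : K)] [FiniteDimensional K V]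
    {ι : Type*} {f g : ι → End K V} (hf : ∀ j, f j * f j = 1) (hff : ∀ j k, Commute (f j) (f k))
    (hg : ∀ j, Function.Injective (g j)) (hgf : ∀ j, g j * f j = -(f j * g j))
    (hfg : ∀ j k, j ≠ k → Commute (f j) (g k)) (s : Finset ι) :
    2 ^ s.card * finrank K ↥(s.inf fun j ↦ eigenspace (f j) 1) = finrank K V := by
  classical
  induction s using Finset.induction_on with
  | empty => rw [Finset.card_empty, pow_zero, one_mul, Finset.inf_empty, finrank_top]
  | insert k s hk ih =>
    have halve := two_mul_finrank_inf_eigenspace_one (hf k) (hg k) (hgf k)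
      (mapsTo_inf_eigenspace_of_commute (fun j (_ : j ∈ s) ↦ hff j k) 1)
      (mapsTo_inf_eigenspace_of_commute
        (fun j (hj : j ∈ s) ↦ hfg j k (ne_of_mem_of_not_mem hj hk)) 1)
    rw [Finset.card_insert_of_notMem hk, Finset.inf_insert, inf_comm, pow_succ, mul_assoc, halve,
      ih]

end JointFixedSpace

/-- The relations of Majorana operators: the members of the family square to `1` and pairwise
anticommute. Self-adjointness is kept separate, so that no star structure is needed. -/
structure IsMajoranaFamily {κ A : Type*} [Ring A] (c : κ → A) : Prop where
  mul_self : ∀ p, c p * c p = 1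
  anticomm : ∀ p q, p ≠ q → c p * c q = -(c q * c p)

/-- The link operators `i c_{(j,0)} c_{(j,1)}` of a family of operators that is indexed by pairs. -/
noncomputable def majoranaLink {ι A : Type*} [Ring A] [Algebra ℂ A] (c : ι × Fin 2 → A) (j : ι) :
    A :=
  Complex.I • (c (j, 0) * c (j, 1))

namespace IsMajoranaFamily

variable {κ ι A : Type*} [Ring A]

theorem comp_injective {c : κ → A} (hc : IsMajoranaFamily c) {e : ι → κ}
    (he : Function.Injective e) : IsMajoranaFamily (c ∘ e) where
  mul_self p := hc.mul_self (e p)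
  anticomm p q hpq := hc.anticomm (e p) (e q) (he.ne hpq)

theorem commute_mul {c : κ → A} (hc : IsMajoranaFamily c) {p q r : κ} (hq : p ≠ q) (hr : p ≠ r) :
    Commute (c p) (c q * c r) := by
  calc c p * (c q * c r) = -(c q * (c p * c r)) := by
        rw [← mul_assoc, hc.anticomm p q hq, neg_mul, mul_assoc]
    _ = c q * c r * c p := by rw [hc.anticomm p r hr, mul_neg, neg_neg, mul_assoc]

variable {c : ι × Fin 2 → A}

theorem anticomm_pair (hc : IsMajoranaFamily c) (j : ι) :
    c (j, 0) * c (j, 1) = -(c (j, 1) * c (j, 0)) :=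
  hc.anticomm _ _ (by simp)

variable [Algebra ℂ A]

theorem commute_majoranaLink_of_fst_ne (hc : IsMajoranaFamily c) {p : ι × Fin 2} {k : ι}
    (h : p.1 ≠ k) : Commute (c p) (majoranaLink c k) :=
  (hc.commute_mul (fun e ↦ h (congrArg Prod.fst e))
    (fun e ↦ h (congrArg Prod.fst e))).smul_right Complex.I

theorem commute_majoranaLink_majoranaLink (hc : IsMajoranaFamily c) (j k : ι) :
    Commute (majoranaLink c j) (majoranaLink c k) := by
  rcases eq_or_ne j k with rfl | hjk
  · exact Commute.refl _
  · have commute_mode (a : Fin 2) : Commute (c (j, a)) (majoranaLink c k) :=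
      hc.commute_majoranaLink_of_fst_ne hjk
    exact ((commute_mode 0).mul_left (commute_mode 1)).smul_left Complex.I

theorem isSelfAdjoint_majoranaLink [StarRing A] [StarModule ℂ A] (hc : IsMajoranaFamily c)
    (hstar : ∀ p, IsSelfAdjoint (c p)) (j : ι) : IsSelfAdjoint (majoranaLink c j) := by
  rw [IsSelfAdjoint, majoranaLink, star_smul, star_mul, (hstar _).star_eq, (hstar _).star_eq,
    hc.anticomm_pair, Complex.star_def, Complex.conj_I, neg_smul, smul_neg]

theorem majoranaLink_mul_self (hc : IsMajoranaFamily c) (j : ι) :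
    majoranaLink c j * majoranaLink c j = 1 := by
  have pair_sq : c (j, 0) * c (j, 1) * (c (j, 0) * c (j, 1)) = -1 := by
    calc c (j, 0) * c (j, 1) * (c (j, 0) * c (j, 1))
        = -(c (j, 0) * (c (j, 1) * c (j, 1)) * c (j, 0)) := by
          nth_rewrite 2 [hc.anticomm_pair]
          simp only [mul_neg, mul_assoc]
      _ = -1 := by rw [hc.mul_self, mul_one, hc.mul_self]
  rw [majoranaLink, smul_mul_smul_comm, pair_sq, Complex.I_mul_I, neg_smul_neg, one_smul]

theorem anticomm_majoranaLink (hc : IsMajoranaFamily c) (j : ι) :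
    c (j, 0) * majoranaLink c j = -(majoranaLink c j * c (j, 0)) := by
  rw [majoranaLink, mul_smul_comm, smul_mul_assoc, ← smul_neg, mul_assoc, ← mul_neg,
    ← hc.anticomm_pair]

theorem two_pow_card_mul_finrank_iInf_eigenspace {V : Type*} [AddCommGroup V] [Module ℂ V]
    [FiniteDimensional ℂ V] [Fintype ι] (hc : IsMajoranaFamily c) (ρ : A →ₐ[ℂ] Module.End ℂ V) :
    2 ^ Fintype.card ι *
      Module.finrank ℂ ↥(⨅ j, Module.End.eigenspace (ρ (majoranaLink c j)) 1) =
        Module.finrank ℂ V := by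
  have injective_map_mode (j : ι) : Function.Injective (ρ (c (j, 0))) :=
    Function.LeftInverse.injective (g := ρ (c (j, 0))) fun v ↦ by
      rw [← Module.End.mul_apply, ← map_mul, hc.mul_self, map_one, Module.End.one_apply]
  rw [← Finset.inf_univ_eq_iInf, ← Finset.card_univ]
  exact two_pow_card_mul_finrank_inf_eigenspace
    (f := fun j ↦ ρ (majoranaLink c j)) (g := fun j ↦ ρ (c (j, 0)))
    (fun j ↦ by rw [← map_mul, hc.majoranaLink_mul_self, map_one])
    (fun j k ↦ (hc.commute_majoranaLink_majoranaLink j k).map ρ)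
    injective_map_mode
    (fun j ↦ by rw [← map_mul, hc.anticomm_majoranaLink, map_neg, map_mul])
    (fun j k hjk ↦ (hc.commute_majoranaLink_of_fst_ne hjk.symm).symm.map ρ) Finset.univ

end IsMajoranaFamily

section TensorProd

variable {n : ℕ}

theorem tensorProd_mul (A B : Fin n → Matrix (Fin 2) (Fin 2) ℂ) :
    tensorProd n A * tensorProd n B = tensorProd n (fun j ↦ A j * B j) := by
  ext x y
  simp only [Matrix.mul_apply, tensorProd, Finset.prod_univ_sum, Fintype.piFinset_univ,
    Finset.prod_mul_distrib]

theorem tensorProd_one : tensorProd n (fun _ ↦ 1) = 1 := by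
  ext x y
  rcases eq_or_ne x y with rfl | hxy
  · simp only [tensorProd, Matrix.one_apply_eq, Finset.prod_const_one]
  · obtain ⟨j, hj⟩ := Function.ne_iff.mp hxy
    rw [Matrix.one_apply_ne hxy]
    exact Finset.prod_eq_zero (Finset.mem_univ j) (Matrix.one_apply_ne hj)

theorem conjTranspose_tensorProd (A : Fin n → Matrix (Fin 2) (Fin 2) ℂ) :
    (tensorProd n A)ᴴ = tensorProd n (fun j ↦ (A j)ᴴ) := by
  ext x y
  simp only [Matrix.conjTranspose_apply, tensorProd, star_prod]

theorem tensorProd_smul (s : Fin n → ℂ) (A : Fin n → Matrix (Fin 2) (Fin 2) ℂ) :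
    tensorProd n (fun j ↦ s j • A j) = (∏ j, s j) • tensorProd n A := by
  ext x y
  simp only [tensorProd, Matrix.smul_apply, smul_eq_mul, Finset.prod_mul_distrib]

theorem tensorProd_anticomm {A B : Fin n → Matrix (Fin 2) (Fin 2) ℂ} (k : Fin n)
    (hk : A k * B k = -(B k * A k)) (h : ∀ j, j ≠ k → Commute (A j) (B j)) :
    tensorProd n A * tensorProd n B = -(tensorProd n B * tensorProd n A) := by
  have site_sign (j : Fin n) : A j * B j = (if j = k then (-1 : ℂ) else 1) • (B j * A j) := by
    split_ifs with hj
    · rw [hj, hk, neg_one_smul]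
    · rw [(h j hj).eq, one_smul]
  rw [tensorProd_mul, tensorProd_mul, funext site_sign, tensorProd_smul, Fintype.prod_ite_eq',
    neg_one_smul]

end TensorProd

section JordanWigner

theorem pauliX_mul_self : pauliX * pauliX = 1 := by
  simp [pauliX, Matrix.one_fin_two]

theorem pauliY_mul_self : pauliY * pauliY = 1 := by
  simp [pauliY, Matrix.one_fin_two]

theorem pauliZ_mul_self : pauliZ * pauliZ = 1 := by
  simp [pauliZ, Matrix.one_fin_two]

theorem conjTranspose_pauliX : pauliXᴴ = pauliX := by
  ext i j; fin_cases i <;> fin_cases j <;> simp [pauliX]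

theorem conjTranspose_pauliY : pauliYᴴ = pauliY := by
  ext i j; fin_cases i <;> fin_cases j <;> simp [pauliY]

theorem conjTranspose_pauliZ : pauliZᴴ = pauliZ := by
  ext i j; fin_cases i <;> fin_cases j <;> simp [pauliZ]

theorem pauliX_mul_pauliZ : pauliX * pauliZ = -(pauliZ * pauliX) := by
  simp [pauliX, pauliZ]

theorem pauliY_mul_pauliZ : pauliY * pauliZ = -(pauliZ * pauliY) := by
  simp [pauliY, pauliZ]

theorem pauliY_mul_pauliX : pauliY * pauliX = -(pauliX * pauliY) := by
  simp [pauliY, pauliX]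

variable {n : ℕ}

theorem jw_mul_self (p : Fin (2 * n)) : jw n p * jw n p = 1 := by
  rw [jw, tensorProd_mul, ← tensorProd_one]
  congr 1
  ext1 j
  split_ifs <;> simp only [pauliX_mul_self, pauliY_mul_self, pauliZ_mul_self, mul_one]

theorem conjTranspose_jw (p : Fin (2 * n)) : (jw n p)ᴴ = jw n p := by
  rw [jw, conjTranspose_tensorProd]
  congr 1
  ext1 j
  split_ifs <;> simp only [conjTranspose_pauliX, conjTranspose_pauliY, conjTranspose_pauliZ,
    Matrix.conjTranspose_one]

theorem jw_anticomm_of_lt {p q : Fin (2 * n)} (hpq : p < q) :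
    jw n p * jw n q = -(jw n q * jw n p) := by
  -- Only at the site of `p` do the two tensor factors fail to commute.
  refine tensorProd_anticomm ⟨(p : ℕ) / 2, by lia⟩ ?_ fun j hj ↦ ?_
  · dsimp only
    split_ifs <;> first | lia | simp only [pauliX_mul_pauliZ, pauliY_mul_pauliZ, pauliY_mul_pauliX]
  · have hj' : (j : ℕ) ≠ p / 2 := fun e ↦ hj (Fin.ext e)
    split_ifs <;> first | lia | simp only [Commute.refl, Commute.one_left]

theorem isMajoranaFamily_jw (n : ℕ) : IsMajoranaFamily (jw n) where
  mul_self := jw_mul_self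
  anticomm p q hpq := by
    rcases lt_or_gt_of_ne hpq with hlt | hgt
    · exact jw_anticomm_of_lt hlt
    · rw [jw_anticomm_of_lt hgt, neg_neg]

/-- The position `2j + ε`, counted from `0`, of the mode `ε` of the `j`-th consecutive pair. -/
def modeIndex (n : ℕ) (p : Fin n × Fin 2) : Fin (2 * n) :=
  ⟨2 * (p.1 : ℕ) + p.2, by lia⟩

theorem modeIndex_injective (n : ℕ) : Function.Injective (modeIndex n) := by
  rintro ⟨j, a⟩ ⟨k, b⟩ h
  simp only [modeIndex, Fin.mk.injEq] at h
  ext <;> dsimp only <;> lia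

theorem linkOp_eq_majoranaLink (σ : Equiv.Perm (Fin (2 * n))) :
    linkOp n σ = majoranaLink (jw n ∘ σ ∘ modeIndex n) :=
  rfl

end JordanWigner

/-- for any permutation `σ` of the `2n` Majorana modes, the operators
`i c_{σ(2j-1)} c_{σ(2j)}` are pairwise commuting Hermitian involutions, and their joint
`(+1)`-eigenspace has complex dimension exactly 1. -/
theorem joint_eigenspace_dimension (n : ℕ) (hn : 1 ≤ n) (σ : Equiv.Perm (Fin (2 * n))) :
    (∀ j k : Fin n, linkOp n σ j * linkOp n σ k = linkOp n σ k * linkOp n σ j) ∧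
    (∀ j : Fin n, (linkOp n σ j)ᴴ = linkOp n σ j) ∧
    (∀ j : Fin n, linkOp n σ j * linkOp n σ j = 1) ∧
    Module.finrank ℂ
      ↥(⨅ j : Fin n,
          Module.End.eigenspace (Matrix.toLin' (linkOp n σ j)) (1 : ℂ)) = 1 := by
  have hc : IsMajoranaFamily (jw n ∘ σ ∘ modeIndex n) :=
    (isMajoranaFamily_jw n).comp_injective (σ.injective.comp (modeIndex_injective n))
  rw [linkOp_eq_majoranaLink]
  refine ⟨hc.commute_majoranaLink_majoranaLink,
    hc.isSelfAdjoint_majoranaLink fun _ ↦ conjTranspose_jw _, hc.majoranaLink_mul_self, ?_⟩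
  have finrank_eq := hc.two_pow_card_mul_finrank_iInf_eigenspace
    (Matrix.toLinAlgEquiv' (R := ℂ) (n := Fin n → Fin 2)).toAlgHom
  rw [Module.finrank_fintype_fun_eq_card, Fintype.card_pi_const, Fintype.card_fin,
    Fintype.card_fin] at finrank_eq
  exact Nat.eq_of_mul_eq_mul_left (by positivity) (finrank_eq.trans (mul_one _).symm)
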